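/- arXiv:2302.09773 — 2 statements merged into one kernel-verified Lean document; each statement's English description precedes it below -/
import Mathlib

section
/- Assume n = 2m is even and let ω ∈ k satisfy ω² = λ. For every integer s with 1 ≤ s ≤ N and each sign ε0 ∈ {1, −1}, the element h = x11^{2s}·χ11^{n} + ε0·ω·x12^{2s}·χ12^{n} of A = A_{Nn}^{μλ} is group-like, i.e. Δ(h) = h ⊗ h and ε(h) = 1. -/
/-!
Write `a = x₁₁`, `b = x₁₂`, `c = x₂₁`, `d = x₂₂`, `P = χ₁₁ⁿ`, `Q = χ₁₂ⁿ`. Since `a`, `d` annihilate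
`b`, `c` on both sides, the cross terms in the powers of `Δ(a)` and `Δ(b)` vanish, and
`Δ(a²ˢ) = a²ˢ ⊗ a²ˢ + b²ˢ ⊗ b²ˢ`, `Δ(b²ˢ) = a²ˢ ⊗ b²ˢ + b²ˢ ⊗ a²ˢ` for `s ≥ 1`. The relations
`χ₂₁ⁿ = λ Q` and `χ₂₂ⁿ = P` turn the comultiplication formula for `χ` into
`Δ(P) = P ⊗ P + λ Q ⊗ Q` and `Δ(Q) = P ⊗ Q + Q ⊗ P`. As `a²ˢ Q = 0 = b²ˢ P`, the elements
`U = a²ˢ P` and `V = b²ˢ Q` satisfy `Δ(U) = U ⊗ U + λ V ⊗ V` and `Δ(V) = U ⊗ V + V ⊗ U`, so that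
`U + t V` is group-like as soon as `t² = λ`; here `t = ε₀ ω`.
-/

open scoped TensorProduct

noncomputable section

/-- The alternating product `x i j * x (i+1) (j+1) * x i j * ⋯` with `m` factors,
    i.e. `χ_{ij}^m` for the Suzuki presentation (indices taken in `Fin 2`). -/
def chi {A : Type*} [Ring A] (x : Fin 2 → Fin 2 → A) : Fin 2 → Fin 2 → ℕ → A
  | _, _, 0 => 1
  | i, j, (m + 1) => x i j * chi x (i + 1) (j + 1) (m)

/-- A presentation of the Suzuki Hopf algebra `A_{Nn}^{μλ}` over `k`:
`x 0 0 = x₁₁`, `x 0 1 = x₁₂`, `x 1 0 = x₂₁`, `x 1 1 = x₂₂`. -/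
structure Suzuki (k A : Type*) [Field k] [CharZero k] [IsAlgClosed k]
    [Ring A] [HopfAlgebra k A] where
  N : ℕ
  n : ℕ
  hN : 1 ≤ N
  hn : 2 ≤ n
  μ : k
  lam : k
  hμ : μ = 1 ∨ μ = -1
  hlam : lam = 1 ∨ lam = -1
  x : Fin 2 → Fin 2 → A
  gen : Algebra.adjoin k (Set.range fun p : Fin 2 × Fin 2 => x p.1 p.2) = ⊤
  rel_sq1 : x 0 0 ^ 2 = x 1 1 ^ 2
  rel_sq2 : x 0 1 ^ 2 = x 1 0 ^ 2
  rel_chi1 : chi x 1 0 n = lam • chi x 0 1 n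
  rel_chi2 : chi x 0 0 n = chi x 1 1 n
  rel_mu : x 0 0 ^ (2 * N) + μ • x 0 1 ^ (2 * N) = 1
  rel_odd : ∀ i j i' j' : Fin 2, Odd ((i : ℕ) + j + i' + j') → x i j * x i' j' = 0
  comul_chi : ∀ (i j : Fin 2) (m : ℕ), 1 ≤ m →
    Coalgebra.comul (R := k) (chi x i j m)
      = chi x i 0 m ⊗ₜ[k] chi x 0 j m + chi x i 1 m ⊗ₜ[k] chi x 1 j m
  counit_x : ∀ i j : Fin 2,
    Coalgebra.counit (R := k) (x i j) = if i = j then (1 : k) else 0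
  antipode_x : ∀ i j : Fin 2,
    HopfAlgebra.antipode (R := k) (x i j) = x j i ^ (4 * N - 1)
  basis_indep : LinearIndependent k (fun p : Fin 2 × Fin (2 * N) × Fin n =>
      if p.1 = 0 then x 0 0 ^ ((p.2.1 : ℕ) + 1) * chi x 1 1 (p.2.2 : ℕ)
      else x 0 1 ^ ((p.2.1 : ℕ) + 1) * chi x 1 0 (p.2.2 : ℕ))
  basis_span : Submodule.span k (Set.range fun p : Fin 2 × Fin (2 * N) × Fin n =>
      if p.1 = 0 then x 0 0 ^ ((p.2.1 : ℕ) + 1) * chi x 1 1 (p.2.2 : ℕ)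
      else x 0 1 ^ ((p.2.1 : ℕ) + 1) * chi x 1 0 (p.2.2 : ℕ)) = ⊤

/-- A Hopf algebra automorphism of `A`: a bijective `k`-linear map `A → A` that is
both an algebra homomorphism and a coalgebra homomorphism. -/
def IsHopfAut (k : Type*) {A : Type*} [Field k] [Ring A] [HopfAlgebra k A]
    (ψ : A ≃ₗ[k] A) : Prop :=
  (∀ a b : A, ψ (a * b) = ψ a * ψ b) ∧ ψ 1 = 1 ∧
  (∀ a : A, Coalgebra.comul (R := k) (ψ a)
      = TensorProduct.map ψ.toLinearMap ψ.toLinearMap (Coalgebra.comul (R := k) a)) ∧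
  (∀ a : A, Coalgebra.counit (R := k) (ψ a) = Coalgebra.counit (R := k) a)

theorem add_pow_of_mul_eq_zero {R : Type*} [Ring R] {X Y : R} (h : X * Y = 0) (h' : Y * X = 0)
    (s : ℕ) (hs : 1 ≤ s) : (X + Y) ^ s = X ^ s + Y ^ s := by
  induction s, hs using Nat.le_induction with
  | base => simp
  | succ s hs ih =>
    obtain ⟨r, rfl⟩ := Nat.exists_eq_add_of_le' hs
    have e1 : X ^ (r + 1) * Y = 0 := by rw [pow_succ, mul_assoc, h, mul_zero]
    have e2 : Y ^ (r + 1) * X = 0 := by rw [pow_succ, mul_assoc, h', mul_zero]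
    rw [pow_succ, ih, add_mul, mul_add, mul_add, e1, e2, add_zero, zero_add, ← pow_succ, ← pow_succ]

namespace Suzuki

variable {k A : Type*} [Field k] [CharZero k] [IsAlgClosed k] [Ring A] [HopfAlgebra k A]

theorem comul_x (S : Suzuki k A) (i j : Fin 2) :
    Coalgebra.comul (R := k) (S.x i j)
      = S.x i 0 ⊗ₜ[k] S.x 0 j + S.x i 1 ⊗ₜ[k] S.x 1 j := by
  simpa [chi] using S.comul_chi i j 1 le_rfl

theorem comul_pow_two_mul_x00 (S : Suzuki k A) (s : ℕ) (hs : 1 ≤ s) :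
    Coalgebra.comul (R := k) (S.x 0 0 ^ (2 * s))
      = (S.x 0 0 ^ (2 * s)) ⊗ₜ[k] (S.x 0 0 ^ (2 * s))
        + (S.x 0 1 ^ (2 * s)) ⊗ₜ[k] (S.x 0 1 ^ (2 * s)) := by
  have h01 : S.x 0 0 * S.x 0 1 = 0 := S.rel_odd 0 0 0 1 (by decide)
  have h10 : S.x 0 1 * S.x 0 0 = 0 := S.rel_odd 0 1 0 0 (by decide)
  rw [Bialgebra.comul_pow, comul_x, add_pow_of_mul_eq_zero _ _ _ (by omega)]
  · simp only [Algebra.TensorProduct.tmul_pow]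
    rw [pow_mul (S.x 1 0), ← S.rel_sq2, ← pow_mul]
  · rw [Algebra.TensorProduct.tmul_mul_tmul, h01, TensorProduct.zero_tmul]
  · rw [Algebra.TensorProduct.tmul_mul_tmul, h10, TensorProduct.zero_tmul]

theorem comul_pow_two_mul_x01 (S : Suzuki k A) (s : ℕ) (hs : 1 ≤ s) :
    Coalgebra.comul (R := k) (S.x 0 1 ^ (2 * s))
      = (S.x 0 0 ^ (2 * s)) ⊗ₜ[k] (S.x 0 1 ^ (2 * s))
        + (S.x 0 1 ^ (2 * s)) ⊗ₜ[k] (S.x 0 0 ^ (2 * s)) := by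
  have h01 : S.x 0 0 * S.x 0 1 = 0 := S.rel_odd 0 0 0 1 (by decide)
  have h10 : S.x 0 1 * S.x 0 0 = 0 := S.rel_odd 0 1 0 0 (by decide)
  rw [Bialgebra.comul_pow, comul_x, add_pow_of_mul_eq_zero _ _ _ (by omega)]
  · simp only [Algebra.TensorProduct.tmul_pow]
    rw [pow_mul (S.x 1 1), ← S.rel_sq1, ← pow_mul]
  · rw [Algebra.TensorProduct.tmul_mul_tmul, h01, TensorProduct.zero_tmul]
  · rw [Algebra.TensorProduct.tmul_mul_tmul, h10, TensorProduct.zero_tmul]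

theorem pow_mul_chi_eq_zero (S : Suzuki k A) (i j i' j' : Fin 2)
    (h : Odd ((i : ℕ) + j + i' + j')) (r l : ℕ) (hr : 1 ≤ r) (hl : 1 ≤ l) :
    S.x i j ^ r * chi S.x i' j' l = 0 := by
  obtain ⟨r, rfl⟩ := Nat.exists_eq_add_of_le' hr
  obtain ⟨l, rfl⟩ := Nat.exists_eq_add_of_le' hl
  rw [chi, pow_succ, mul_assoc, ← mul_assoc (S.x i j), S.rel_odd i j i' j' h, zero_mul, mul_zero]

theorem counit_chi_diag (S : Suzuki k A) (l : ℕ) (i : Fin 2) :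
    Coalgebra.counit (R := k) (chi S.x i i l) = 1 := by
  induction l generalizing i with
  | zero => simp [chi]
  | succ l ih => rw [chi, Bialgebra.counit_mul, ih, S.counit_x]; simp

end Suzuki

/-- for even `n = 2m`, `ω² = λ`, `1 ≤ s ≤ N`, `ε₀ = ±1`, the element
`h = x₁₁^{2s} χ₁₁^{n} + ε₀ ω x₁₂^{2s} χ₁₂^{n}` is group-like. -/
theorem stmt3 (k A : Type*) [Field k] [CharZero k] [IsAlgClosed k]
    [Ring A] [HopfAlgebra k A] (S : Suzuki k A)
    (m : ℕ) (hm : S.n = 2 * m) (ω : k) (hω : ω ^ 2 = S.lam)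
    (s : ℕ) (hs1 : 1 ≤ s) (hs2 : s ≤ S.N) (ε0 : k) (hε0 : ε0 = 1 ∨ ε0 = -1) :
    Coalgebra.comul (R := k)
        (S.x 0 0 ^ (2 * s) * chi S.x 0 0 S.n
          + (ε0 * ω) • (S.x 0 1 ^ (2 * s) * chi S.x 0 1 S.n))
      = (S.x 0 0 ^ (2 * s) * chi S.x 0 0 S.n
          + (ε0 * ω) • (S.x 0 1 ^ (2 * s) * chi S.x 0 1 S.n))
        ⊗ₜ[k]
        (S.x 0 0 ^ (2 * s) * chi S.x 0 0 S.n
          + (ε0 * ω) • (S.x 0 1 ^ (2 * s) * chi S.x 0 1 S.n))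
    ∧ Coalgebra.counit (R := k)
        (S.x 0 0 ^ (2 * s) * chi S.x 0 0 S.n
          + (ε0 * ω) • (S.x 0 1 ^ (2 * s) * chi S.x 0 1 S.n)) = 1 := by
  have ht : (ε0 * ω) * (ε0 * ω) = S.lam := by
    rcases hε0 with rfl | rfl <;> rw [← hω] <;> ring
  have hn1 : 1 ≤ S.n := by have := S.hn; omega
  have hU : Coalgebra.comul (R := k) (S.x 0 0 ^ (2 * s) * chi S.x 0 0 S.n)
      = (S.x 0 0 ^ (2 * s) * chi S.x 0 0 S.n) ⊗ₜ[k] (S.x 0 0 ^ (2 * s) * chi S.x 0 0 S.n)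
        + S.lam • ((S.x 0 1 ^ (2 * s) * chi S.x 0 1 S.n)
          ⊗ₜ[k] (S.x 0 1 ^ (2 * s) * chi S.x 0 1 S.n)) := by
    rw [Bialgebra.comul_mul, S.comul_pow_two_mul_x00 s hs1, S.comul_chi 0 0 _ hn1, S.rel_chi1]
    simp only [add_mul, mul_add, Algebra.TensorProduct.tmul_mul_tmul,
      S.pow_mul_chi_eq_zero 0 0 0 1 (by decide) (2 * s) S.n (by omega) hn1,
      S.pow_mul_chi_eq_zero 0 1 0 0 (by decide) (2 * s) S.n (by omega) hn1,
      TensorProduct.zero_tmul, mul_smul_comm, TensorProduct.tmul_smul, add_zero, zero_add]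
  have hV : Coalgebra.comul (R := k) (S.x 0 1 ^ (2 * s) * chi S.x 0 1 S.n)
      = (S.x 0 0 ^ (2 * s) * chi S.x 0 0 S.n) ⊗ₜ[k] (S.x 0 1 ^ (2 * s) * chi S.x 0 1 S.n)
        + (S.x 0 1 ^ (2 * s) * chi S.x 0 1 S.n)
          ⊗ₜ[k] (S.x 0 0 ^ (2 * s) * chi S.x 0 0 S.n) := by
    rw [Bialgebra.comul_mul, S.comul_pow_two_mul_x01 s hs1, S.comul_chi 0 1 _ hn1, ← S.rel_chi2]
    simp only [add_mul, mul_add, Algebra.TensorProduct.tmul_mul_tmul,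
      S.pow_mul_chi_eq_zero 0 0 0 1 (by decide) (2 * s) S.n (by omega) hn1,
      S.pow_mul_chi_eq_zero 0 1 0 0 (by decide) (2 * s) S.n (by omega) hn1,
      TensorProduct.zero_tmul, add_zero, zero_add]
  constructor
  · rw [map_add, map_smul, hU, hV, ← ht]
    simp only [TensorProduct.add_tmul, TensorProduct.tmul_add, TensorProduct.tmul_smul,
      ← TensorProduct.smul_tmul', smul_add, smul_smul]
    abel
  · have hs0 : 2 * s ≠ 0 := by omega
    rw [map_add, map_smul, Bialgebra.counit_mul, Bialgebra.counit_mul, Bialgebra.counit_pow,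
      Bialgebra.counit_pow, S.counit_chi_diag, S.counit_x, S.counit_x]
    simp [hs0]
end
end

section
/- Let 1 ≤ s ≤ N, 1 ≤ t ≤ n − 1 with t odd, and set P = x11^{2s}χ11^t, Q = x11^{2s}χ22^t, R = x12^{2s}χ12^t, T = x12^{2s}χ21^t in A = A_{Nn}^{μλ}. For scalars a1, a2, a3, b1, b2, b3, d1, d2, d3, e1, e2, e3 ∈ k put y = a1·P + (1−a1)·Q + a2·R + a3·T, z = b1·P + (1−b1)·Q + b2·R + b3·T, u = d1·P − d1·Q + d2·R + d3·T, v = e1·P − e1·Q + e2·R + e3·T. Then: (i) y·u = 0 iff (1−2a1)d1 = 0, a2d2 + a3d3 = 0, and, when 2t ≠ n, also d1 = 0, a2d3 = 0, a3d2 = 0, while when 2t = n, also a2d3 + λ·a3d2 = 0; (ii) z·u = 0 iff the same conditions hold with (a1,a2,a3) replaced by (b1,b2,b3); (iii) y·v = 0 iff the conditions of (i) hold with (d1,d2,d3) replaced by (e1,e2,e3); (iv) z·v = 0 iff the conditions of (i) hold with (a1,a2,a3) replaced by (b1,b2,b3) and (d1,d2,d3) replaced by (e1,e2,e3). -/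
/-! Write `a, b` for `x₁₁, x₂₂` (or for `x₁₂, x₂₁`). Since `a² = b² =: z` commutes with both letters,
products of alternating words of odd length `t` collapse: a word times itself is `z ^ t`, and the
two words multiplied with each other give the alternating words of length `2t`
(`alt_mul_self`, `alt_mul_opp`). Letters of the two families annihilate each other, so `y * u` is
a sum of one part in each family, each a combination of `z^(2s+t)` and of `z^(2s)` times the two
alternating words of length `2t` (`product_formula`).

The relation `1 = x₁₁^(2N) + μ x₁₂^(2N)` shows that the two parts vanish separately. Inside one
family (`core`), words of length `n + r` fold back to words of length `n - r` (`alt_fold`), so for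
`2t ≠ n` the three elements are multiples of three different basis vectors, whereas for `2t = n`
the two words of length `2t` are proportional. Reading off coefficients gives the criteria. -/

open scoped TensorProduct

noncomputable section

/-- The alternating word `a b a b ⋯` with `m` letters, starting with `a`. -/
def alt {A : Type*} [Ring A] : A → A → ℕ → A
  | _, _, 0 => 1
  | a, b, (m + 1) => a * alt b a m

section Words

variable {A : Type*} [Ring A]

lemma alt_succ (a b : A) (m : ℕ) : alt a b (m + 1) = a * alt b a m := rfl

lemma chi_eq_alt (x : Fin 2 → Fin 2 → A) (i j : Fin 2) (m : ℕ) :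
    chi x i j m = alt (x i j) (x (i + 1) (j + 1)) m := by
  induction m generalizing i j with
  | zero => rfl
  | succ m ih =>
    have h : ∀ i : Fin 2, i + 1 + 1 = i := by decide
    rw [chi, alt_succ, ih, h, h]

lemma alt_odd_add (a b : A) (j q : ℕ) :
    alt a b (2 * j + 1 + q) = alt a b (2 * j + 1) * alt b a q := by
  induction j with
  | zero => simp [Nat.add_comm 1 q, alt]
  | succ j ih =>
    rw [show 2 * (j + 1) + 1 + q = (2 * j + 1 + q) + 1 + 1 by ring,
      show 2 * (j + 1) + 1 = (2 * j + 1) + 1 + 1 by ring]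
    simp only [alt_succ a b (_ + 1), alt_succ b a (2 * j + 1 + q), alt_succ b a (2 * j + 1), ih,
      mul_assoc]

/-- The letters of the first word cancel against the initial letters of the second one. -/
lemma alt_mul_alt (a b z : A) (ha : a * a = z) (hb : b * b = z) (j q : ℕ) :
    alt a b (2 * j + 1) * alt a b (2 * j + 1 + q) = z ^ (2 * j + 1) * alt b a q := by
  have hza : Commute z a := by subst ha; exact (Commute.refl a).mul_left (Commute.refl a)
  have hzb : Commute z b := by subst hb; exact (Commute.refl b).mul_left (Commute.refl b)
  induction j generalizing q with
  | zero => simp [Nat.add_comm 1 q, alt, ← mul_assoc, ha]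
  | succ j ih =>
    rw [show 2 * (j + 1) + 1 + q = 2 * j + 1 + (q + 2) by ring,
      show 2 * (j + 1) + 1 = (2 * j + 1) + 1 + 1 by ring,
      alt_succ a b (_ + 1), alt_succ b a, mul_assoc, mul_assoc, ih, alt_succ b a, alt_succ a b]
    calc a * (b * (z ^ (2 * j + 1) * (b * (a * alt b a q))))
        = a * (b * z ^ (2 * j + 1)) * b * a * alt b a q := by simp only [mul_assoc]
      _ = (a * z ^ (2 * j + 1)) * (b * b) * a * alt b a q := by
          rw [← (hzb.pow_left _).eq]; simp only [mul_assoc]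
      _ = z ^ (2 * j + 1) * a * z * a * alt b a q := by rw [hb, (hza.pow_left _).eq]
      _ = z ^ (2 * j + 1) * z * (a * a) * alt b a q := by
          rw [mul_assoc _ a z, ← hza.eq]; simp only [mul_assoc]
      _ = _ := by rw [ha, pow_succ z (2 * j + 1 + 1), pow_succ z (2 * j + 1)]

lemma alt_mul_self (a b z : A) (ha : a * a = z) (hb : b * b = z) (t : ℕ) (ht : Odd t) :
    alt a b t * alt a b t = z ^ t := by
  obtain ⟨j, rfl⟩ := ht
  simpa [alt] using alt_mul_alt a b z ha hb j 0

lemma alt_mul_opp (a b : A) (t : ℕ) (ht : Odd t) :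
    alt a b t * alt b a t = alt a b (2 * t) := by
  obtain ⟨j, rfl⟩ := ht
  rw [two_mul (2 * j + 1), alt_odd_add]

lemma alt_mul_eq_zero (a b c : A) (ha : a * c = 0) (hb : b * c = 0) (m : ℕ) (hm : 1 ≤ m) :
    alt a b m * c = 0 := by
  obtain ⟨m, rfl⟩ : ∃ m', m = m' + 1 := ⟨m - 1, by omega⟩
  induction m generalizing a b with
  | zero => simpa [alt] using ha
  | succ m ih => rw [alt_succ, mul_assoc, ih b a hb ha (by omega), mul_zero]

lemma commute_alt (a b z : A) (hza : Commute z a) (hzb : Commute z b) (m : ℕ) :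
    Commute z (alt a b m) := by
  induction m generalizing a b with
  | zero => exact Commute.one_right z
  | succ m ih => exact hza.mul_right (ih b a hzb hza)

variable {k : Type*} [Field k] [Algebra k A]

/-- If the two words of length `n` agree up to the scalar `l`, a word of length `n + r` folds back
to a word of length `n - r`: the letters beyond `n` cancel in pairs. -/
lemma alt_fold (a b z : A) (l : k) (n : ℕ) (ha : a * a = z) (hb : b * b = z)
    (h : alt a b n = l • alt b a n) (h' : alt b a n = l • alt a b n) (r : ℕ) (hr : r ≤ n) :
    alt a b (n + r) = l • (z ^ r * alt b a (n - r)) := by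
  induction r generalizing a b with
  | zero => simpa using h
  | succ r ih =>
    have hza : Commute z a := by subst ha; exact (Commute.refl a).mul_left (Commute.refl a)
    rw [show n + (r + 1) = n + r + 1 by ring, alt_succ, ih b a hb ha h' h (by omega),
      show n - r = (n - (r + 1)) + 1 by omega, alt_succ a b, mul_smul_comm, ← mul_assoc a,
      ← (hza.pow_left r).eq, mul_assoc, ← mul_assoc a, ha, pow_succ, mul_assoc]

/-- `a ^ p` with `p ≥ 1` is, up to a unit scalar, a power with exponent between `1` and `M`. -/
lemma pow_reduce (a : A) (ν : kˣ) (M : ℕ) (hM : 1 ≤ M) (h : a ^ (M + 1) = (ν : k) • a) (p : ℕ) :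
    ∃ (w : kˣ) (q : Fin M), a ^ (p + 1) = (w : k) • a ^ ((q : ℕ) + 1) := by
  induction p using Nat.strong_induction_on with
  | _ p ih =>
    by_cases hp : p < M
    · exact ⟨1, ⟨p, hp⟩, by simp⟩
    · obtain ⟨w, q, hq⟩ := ih (p - M) (by omega)
      refine ⟨ν * w, q, ?_⟩
      rw [show p + 1 = (M + 1) + (p - M) by omega, pow_add, h, smul_mul_assoc, ← pow_succ', hq,
        smul_smul, Units.val_mul]

lemma linIndep_words (a b : A) (ν : kˣ) (M n : ℕ) (hM : 1 ≤ M) (h : a ^ (M + 1) = (ν : k) • a)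
    (hli : LinearIndependent k
      (fun p : Fin M × Fin n => a ^ ((p.1 : ℕ) + 1) * alt b a (p.2 : ℕ)))
    {r : ℕ} (p m : Fin r → ℕ) (hp : ∀ i, 1 ≤ p i) (hm : ∀ i, m i < n)
    (hinj : Function.Injective m) :
    LinearIndependent k (fun i => a ^ p i * alt b a (m i)) := by
  choose w q hq using fun i => pow_reduce a ν M hM h (p i - 1)
  have hli' := (hli.comp (fun i : Fin r => (q i, (⟨m i, hm i⟩ : Fin n)))
    (fun i j hij => hinj (by simpa using congrArg (fun x => (x.2 : ℕ)) hij))).units_smul w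
  convert hli' using 1
  funext i
  have h1 := hq i
  rw [Nat.sub_add_cancel (hp i)] at h1
  simp [h1, Units.smul_def]

/-- Vanishing of one family's part of the product. -/
lemma core (a b : A) (ν : kˣ) (l : k) (M n w t : ℕ) (hM : 1 ≤ M) (hw : 1 ≤ w) (ht : 1 ≤ t)
    (htn : t < n) (hl : l * l = 1) (hab : b * b = a * a) (h : a ^ (M + 1) = (ν : k) • a)
    (hrel : alt b a n = l • alt a b n)
    (hli : LinearIndependent k
      (fun p : Fin M × Fin n => a ^ ((p.1 : ℕ) + 1) * alt b a (p.2 : ℕ))) (α β γ : k) :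
    α • (a * a) ^ (w + t) + β • ((a * a) ^ w * alt a b (2 * t))
        + γ • ((a * a) ^ w * alt b a (2 * t)) = 0 ↔
      α = 0 ∧ (2 * t ≠ n → β = 0 ∧ γ = 0) ∧ (2 * t = n → β + l * γ = 0) := by
  have hrel' : alt a b n = l • alt b a n := by rw [hrel, smul_smul, hl, one_smul]
  have hz : ∀ p, (a * a) ^ p = a ^ (2 * p) := fun p => by rw [pow_mul, pow_two]
  by_cases h2 : 2 * t = n
  · have e1 : alt a b n = a * alt b a (n - 1) := by
      rw [← alt_succ, Nat.sub_add_cancel (by omega)]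
    have key : α • (a * a) ^ (w + t) + β • ((a * a) ^ w * alt a b (2 * t))
        + γ • ((a * a) ^ w * alt b a (2 * t))
        = α • (a ^ (2 * (w + t)) * alt b a 0)
          + (β + l * γ) • (a ^ (2 * w + 1) * alt b a (n - 1)) := by
      rw [h2, hrel, e1, hz, hz, mul_smul_comm, ← mul_assoc, ← pow_succ, alt, mul_one]
      module
    rw [key]
    constructor
    · intro h0
      have hL := linIndep_words a b ν M n hM h hli ![2 * (w + t), 2 * w + 1] ![0, n - 1]
        (by intro i; fin_cases i <;> simp <;> omega)
        (by intro i; fin_cases i <;> simp <;> omega)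
        (by intro i j; fin_cases i <;> fin_cases j <;> simp <;> omega)
      rw [Fintype.linearIndependent_iff] at hL
      have := hL ![α, β + l * γ] (by simpa [Fin.sum_univ_two] using h0)
      exact ⟨this 0, fun hh => absurd h2 hh, fun _ => this 1⟩
    · rintro ⟨h0, -, h1⟩
      rw [h0, h1 h2]; simp
  · suffices hL : α • (a * a) ^ (w + t) + β • ((a * a) ^ w * alt a b (2 * t))
        + γ • ((a * a) ^ w * alt b a (2 * t)) = 0 → α = 0 ∧ β = 0 ∧ γ = 0 by
      refine ⟨fun h0 => ⟨(hL h0).1, fun _ => (hL h0).2, fun hh => absurd hh h2⟩, ?_⟩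
      rintro ⟨h0, h1, -⟩
      rw [h0, (h1 h2).1, (h1 h2).2]; simp
    intro h0
    have three : ∀ (p1 p2 p3 m : ℕ) (α β γ : k), 1 ≤ p1 → 1 ≤ p2 → 1 ≤ p3 → 1 ≤ m → m + 1 < n →
        α • (a ^ p1 * alt b a 0) + β • (a ^ p2 * alt b a m)
          + γ • (a ^ p3 * alt b a (m + 1)) = 0 → α = 0 ∧ β = 0 ∧ γ = 0 := by
      intro p1 p2 p3 m α β γ h1 h2 h3 hm hmn h0
      have hL := linIndep_words a b ν M n hM h hli ![p1, p2, p3] ![0, m, m + 1]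
        (by intro i; fin_cases i <;> simp <;> omega)
        (by intro i; fin_cases i <;> simp <;> omega)
        (by intro i j; fin_cases i <;> fin_cases j <;> simp <;> omega)
      rw [Fintype.linearIndependent_iff] at hL
      have := hL ![α, β, γ] (by simpa [Fin.sum_univ_three] using h0)
      exact ⟨this 0, this 1, this 2⟩
    have hl0 : l ≠ 0 := by rintro rfl; simp at hl
    rcases lt_or_gt_of_ne h2 with hlt | hgt
    · refine three (2 * (w + t)) (2 * w + 1) (2 * w) (2 * t - 1) α β γ (by omega) (by omega)
        (by omega) (by omega) (by omega) ?_
      have e1 : alt a b (2 * t) = a * alt b a (2 * t - 1) := by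
        rw [← alt_succ, Nat.sub_add_cancel (by omega)]
      rw [Nat.sub_add_cancel (by omega), pow_succ, mul_assoc, ← e1, ← hz, ← hz, alt, mul_one, h0]
    · obtain ⟨r, hr⟩ : ∃ r, 2 * t = n + r := ⟨2 * t - n, by omega⟩
      have e1 : alt a b (n - r) = a * alt b a (n - r - 1) := by
        rw [← alt_succ, Nat.sub_add_cancel (by omega)]
      -- Folding exchanges the two words, hence the order of `β` and `γ`.
      obtain ⟨hα, hγ, hβ⟩ := three (2 * (w + t)) (2 * (w + r) + 1) (2 * (w + r)) (n - r - 1)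
        α (γ * l) (β * l) (by omega) (by omega) (by omega) (by omega) (by omega) (by
          rw [Nat.sub_add_cancel (by omega), pow_succ, mul_assoc, ← e1, ← hz, ← hz, alt, mul_one,
            ← h0, hr, alt_fold a b (a * a) l n rfl hab hrel' hrel r (by omega),
            alt_fold b a (a * a) l n hab rfl hrel hrel' r (by omega),
            mul_smul_comm, mul_smul_comm, ← mul_assoc, ← mul_assoc, ← pow_add]
          module)
      exact ⟨hα, (mul_eq_zero.mp hβ).resolve_right hl0, (mul_eq_zero.mp hγ).resolve_right hl0⟩

/-- The product of two combinations of the words `z^s a b a ⋯` and `z^s b a b ⋯` of odd length. -/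
lemma product_formula (a b : A) (hab : b * b = a * a) (s t : ℕ) (ht : Odd t) (p q p' q' : k) :
    (p • ((a * a) ^ s * alt a b t) + q • ((a * a) ^ s * alt b a t))
      * (p' • ((a * a) ^ s * alt a b t) + q' • ((a * a) ^ s * alt b a t))
    = (p * p' + q * q') • (a * a) ^ (2 * s + t)
      + (p * q') • ((a * a) ^ (2 * s) * alt a b (2 * t))
      + (q * p') • ((a * a) ^ (2 * s) * alt b a (2 * t)) := by
  have hza : Commute (a * a) a := (Commute.refl a).mul_left (Commute.refl a)
  have hzb : Commute (a * a) b := by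
    rw [← hab]; exact (Commute.refl b).mul_left (Commute.refl b)
  have push : ∀ X Y : A, Commute (a * a) X →
      ((a * a) ^ s * X) * ((a * a) ^ s * Y) = (a * a) ^ (2 * s) * (X * Y) := by
    intro X Y hX
    rw [mul_assoc, ← mul_assoc X, ← (hX.pow_left s).eq, two_mul, pow_add]
    simp only [mul_assoc]
  have c1 := commute_alt a b _ hza hzb t
  have c2 := commute_alt b a _ hzb hza t
  simp only [mul_add, add_mul, smul_mul_assoc, mul_smul_comm, push _ _ c1, push _ _ c2,
    alt_mul_self a b _ rfl hab t ht, alt_mul_self b a _ hab rfl t ht, alt_mul_opp _ _ t ht,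
    ← pow_add]
  module

lemma family_mul_eq_zero (a b c : A) (hac : a * c = 0) (hbc : b * c = 0) (s t s' : ℕ)
    (ht : 1 ≤ t) (hs' : 1 ≤ s') (X Y : A) (p q p' q' : k) :
    (p • ((a * a) ^ s * alt a b t) + q • ((a * a) ^ s * alt b a t))
      * (p' • ((c * c) ^ s' * X) + q' • ((c * c) ^ s' * Y)) = 0 := by
  obtain ⟨r, rfl⟩ : ∃ r, s' = r + 1 := ⟨s' - 1, by omega⟩
  have h : ∀ X : A, (c * c) ^ (r + 1) * X = c * (c * (c * c) ^ r * X) := by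
    intro X; rw [pow_succ']; simp only [mul_assoc]
  have hY : ∀ Y : A, (p • ((a * a) ^ s * alt a b t) + q • ((a * a) ^ s * alt b a t)) * (c * Y)
      = 0 := by
    intro Y
    rw [← mul_assoc, add_mul, smul_mul_assoc, smul_mul_assoc, mul_assoc, mul_assoc,
      alt_mul_eq_zero a b c hac hbc t ht, alt_mul_eq_zero b a c hbc hac t ht]
    simp
  rw [mul_add, mul_smul_comm, mul_smul_comm, h, h, hY, hY]
  simp

end Words

/-- The criterion for one product, with arbitrary coefficients; the four claims are instances. -/
lemma criterion {k A : Type*} [Field k] [CharZero k] [IsAlgClosed k]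
    [Ring A] [HopfAlgebra k A] (S : Suzuki k A)
    (s t : ℕ) (hs1 : 1 ≤ s) (ht1 : 1 ≤ t) (ht2 : t ≤ S.n - 1) (htodd : Odd t)
    (P Q R T : A)
    (hP : P = S.x 0 0 ^ (2 * s) * chi S.x 0 0 t)
    (hQ : Q = S.x 0 0 ^ (2 * s) * chi S.x 1 1 t)
    (hR : R = S.x 0 1 ^ (2 * s) * chi S.x 0 1 t)
    (hT : T = S.x 0 1 ^ (2 * s) * chi S.x 1 0 t)
    (a1 a2 a3 d1 d2 d3 : k) :
    (a1 • P + (1 - a1) • Q + a2 • R + a3 • T) * (d1 • P - d1 • Q + d2 • R + d3 • T) = 0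
      ↔ (1 - 2 * a1) * d1 = 0 ∧ a2 * d2 + a3 * d3 = 0 ∧
        (2 * t ≠ S.n → d1 = 0 ∧ a2 * d3 = 0 ∧ a3 * d2 = 0) ∧
        (2 * t = S.n → a2 * d3 + S.lam * (a3 * d2) = 0) := by
  have hn := S.hn
  have hN := S.hN
  have hmu := S.rel_mu
  have hli := S.basis_indep
  have r1 := S.rel_chi1
  have r2 := S.rel_chi2
  have hll : S.lam * S.lam = 1 := by rcases S.hlam with h | h <;> simp [h]
  have hmm : S.μ * S.μ = 1 := by rcases S.hμ with h | h <;> simp [h]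
  have hab : S.x 1 1 * S.x 1 1 = S.x 0 0 * S.x 0 0 := by
    rw [← pow_two, ← pow_two, S.rel_sq1]
  have hcd : S.x 1 0 * S.x 1 0 = S.x 0 1 * S.x 0 1 := by
    rw [← pow_two, ← pow_two, S.rel_sq2]
  have hac := S.rel_odd 0 0 0 1 (by decide)
  have hbc := S.rel_odd 1 1 0 1 (by decide)
  have hca := S.rel_odd 0 1 0 0 (by decide)
  have hda := S.rel_odd 1 0 0 0 (by decide)
  simp only [chi_eq_alt, show (0 : Fin 2) + 1 = 1 from rfl, show (1 : Fin 2) + 1 = 0 from rfl]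
    at hP hQ hR hT hli r1 r2
  generalize S.x 0 0 = a at *
  generalize S.x 0 1 = c at *
  generalize S.x 1 0 = d at *
  generalize S.x 1 1 = b at *
  generalize hμ' : S.μ = μ at *
  generalize hN' : S.N = N at *
  generalize hn' : S.n = n at *
  generalize hl' : S.lam = lam at *
  have hμ0 : μ ≠ 0 := by rintro rfl; simp at hmm
  have hli1 := hli.comp (fun p : Fin (2 * N) × Fin n => ((0 : Fin 2), p))
    (fun p q h => by simpa using h)
  have hli2 := hli.comp (fun p : Fin (2 * N) × Fin n => ((1 : Fin 2), p))
    (fun p q h => by simpa using h)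
  have hpa : a ^ (2 * N + 1) = ((1 : kˣ) : k) • a := by
    have h := congrArg (a * ·) hmu
    obtain ⟨M, hM⟩ : ∃ M, 2 * N = M + 1 := ⟨2 * N - 1, by omega⟩
    simp only [mul_add, mul_smul_comm, mul_one] at h
    rw [← pow_succ', hM, pow_succ' c, ← mul_assoc, hac, ← hM] at h
    simpa using h
  -- The sign `μ` enters here: `x₁₂ ^ (2N + 1) = μ x₁₂`.
  have hpc : c ^ (2 * N + 1) = ((Units.mk0 μ hμ0 : kˣ) : k) • c := by
    have h := congrArg (c * ·) hmu
    obtain ⟨M, hM⟩ : ∃ M, 2 * N = M + 1 := ⟨2 * N - 1, by omega⟩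
    simp only [mul_add, mul_smul_comm, mul_one] at h
    rw [← pow_succ' c, hM, pow_succ' a, ← mul_assoc, hca, ← hM] at h
    rw [Units.val_mk0]
    calc c ^ (2 * N + 1) = (μ * μ) • c ^ (2 * N + 1) := by rw [hmm, one_smul]
      _ = μ • c := by rw [mul_smul]; congr 1; simpa using h
  have hy : a1 • P + (1 - a1) • Q + a2 • R + a3 • T
      = (a1 • ((a * a) ^ s * alt a b t) + (1 - a1) • ((a * a) ^ s * alt b a t))
        + (a2 • ((c * c) ^ s * alt c d t) + a3 • ((c * c) ^ s * alt d c t)) := by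
    rw [hP, hQ, hR, hT, pow_mul, pow_mul, pow_two, pow_two, add_assoc]
  have hu : d1 • P - d1 • Q + d2 • R + d3 • T
      = (d1 • ((a * a) ^ s * alt a b t) + (-d1) • ((a * a) ^ s * alt b a t))
        + (d2 • ((c * c) ^ s * alt c d t) + d3 • ((c * c) ^ s * alt d c t)) := by
    rw [hP, hQ, hR, hT, pow_mul, pow_mul, pow_two, pow_two, add_assoc, neg_smul, sub_eq_add_neg]
  have core1 := core a b 1 1 (2 * N) n (2 * s) t (by omega) (by omega) ht1 (by omega) (by simp)
    hab hpa (by rw [one_smul, r2]) (by simpa [Function.comp_def] using hli1)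
    (a1 * d1 + (1 - a1) * -d1) (a1 * -d1) ((1 - a1) * d1)
  have core2 := core c d (Units.mk0 μ hμ0) lam (2 * N) n (2 * s) t (by omega) (by omega) ht1
    (by omega) hll hcd hpc r1 (by simpa [Function.comp_def] using hli2)
    (a2 * d2 + a3 * d3) (a2 * d3) (a3 * d2)
  have f1 := product_formula a b hab s t htodd a1 (1 - a1) d1 (-d1)
  have f2 := product_formula c d hcd s t htodd a2 a3 d2 d3
  rw [← f1] at core1
  rw [← f2] at core2
  have z1 := family_mul_eq_zero a b c hac hbc s t s ht1 hs1 (alt c d t) (alt d c t)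
    a1 (1 - a1) d2 d3
  have z2 := family_mul_eq_zero c d a hca hda s t s ht1 hs1 (alt a b t) (alt b a t)
    a2 a3 d1 (-d1)
  -- Left multiplication by a letter of one family kills the other family's part.
  have kill : ∀ (u v : A) (W : A) (p q : k) (X Y : A), u * v = 0 →
      u * ((p • ((v * v) ^ s * X) + q • ((v * v) ^ s * Y)) * W) = 0 := by
    intro u v W p q X Y huv
    obtain ⟨r, hr⟩ : ∃ r, s = r + 1 := ⟨s - 1, by omega⟩
    have h : ∀ X : A, u * ((v * v) ^ s * X) = 0 := by
      intro X
      rw [hr, pow_succ', mul_assoc, mul_assoc, ← mul_assoc u, huv, zero_mul]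
    rw [← mul_assoc, mul_add, mul_smul_comm, mul_smul_comm, h, h]
    simp
  have k1 := kill c a (d1 • ((a * a) ^ s * alt a b t) + (-d1) • ((a * a) ^ s * alt b a t))
    a1 (1 - a1) (alt a b t) (alt b a t) hca
  have k2 := kill a c (d2 • ((c * c) ^ s * alt c d t) + d3 • ((c * c) ^ s * alt d c t))
    a2 a3 (alt c d t) (alt d c t) hac
  have expand : ∀ Y Y' U U' : A, Y * U' = 0 → Y' * U = 0 →
      (Y + Y') * (U + U') = Y * U + Y' * U' := by
    intro Y Y' U U' h h'
    rw [add_mul, mul_add, mul_add, h, h', add_zero, zero_add]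
  rw [hy, hu, expand _ _ _ _ z1 z2]
  have split : ∀ U V : A, c * U = 0 → a * V = 0 → (U + V = 0 ↔ U = 0 ∧ V = 0) := by
    intro U V hU hV
    refine ⟨fun h => ?_, fun h => by rw [h.1, h.2, add_zero]⟩
    have haU : a * U = 0 := by
      have := congrArg (a * ·) h
      simpa [mul_add, hV] using this
    have hU0 : U = 0 := by
      obtain ⟨M, hM⟩ : ∃ M, 2 * N = M + 1 := ⟨2 * N - 1, by omega⟩
      rw [← one_mul U, ← hmu, hM, add_mul, smul_mul_assoc, pow_succ, pow_succ, mul_assoc,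
        mul_assoc, haU, hU]
      simp
    exact ⟨hU0, by simpa [hU0] using h⟩
  rw [split _ _ k1 k2, core1, core2]
  constructor
  · rintro ⟨⟨h1, h2, -⟩, h4, h5, h6⟩
    refine ⟨by linear_combination -h1, h4, fun hh => ⟨?_, h5 hh⟩, h6⟩
    linear_combination (h2 hh).2 - (h2 hh).1
  · rintro ⟨h1, h2, h3, h4⟩
    refine ⟨⟨by linear_combination -h1, fun hh => ?_, fun _ => by linear_combination h1⟩, h2,
      fun hh => (h3 hh).2, h4⟩
    simp [(h3 hh).1]

/-- t odd: criteria for `y·u = 0`, `z·u = 0`, `y·v = 0`, `z·v = 0`. -/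
theorem stmt7 (k A : Type*) [Field k] [CharZero k] [IsAlgClosed k]
    [Ring A] [HopfAlgebra k A] (S : Suzuki k A)
    (s t : ℕ) (hs1 : 1 ≤ s) (hs2 : s ≤ S.N) (ht1 : 1 ≤ t) (ht2 : t ≤ S.n - 1)
    (htodd : Odd t)
    (P Q R T : A)
    (hP : P = S.x 0 0 ^ (2 * s) * chi S.x 0 0 t)
    (hQ : Q = S.x 0 0 ^ (2 * s) * chi S.x 1 1 t)
    (hR : R = S.x 0 1 ^ (2 * s) * chi S.x 0 1 t)
    (hT : T = S.x 0 1 ^ (2 * s) * chi S.x 1 0 t)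
    (a1 a2 a3 b1 b2 b3 d1 d2 d3 e1 e2 e3 : k)
    (y z u v : A)
    (hy : y = a1 • P + (1 - a1) • Q + a2 • R + a3 • T)
    (hz : z = b1 • P + (1 - b1) • Q + b2 • R + b3 • T)
    (hu : u = d1 • P - d1 • Q + d2 • R + d3 • T)
    (hv : v = e1 • P - e1 • Q + e2 • R + e3 • T) :
    (y * u = 0
      ↔ (1 - 2 * a1) * d1 = 0 ∧ a2 * d2 + a3 * d3 = 0 ∧
        (2 * t ≠ S.n → d1 = 0 ∧ a2 * d3 = 0 ∧ a3 * d2 = 0) ∧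
        (2 * t = S.n → a2 * d3 + S.lam * (a3 * d2) = 0))
    ∧ (z * u = 0
      ↔ (1 - 2 * b1) * d1 = 0 ∧ b2 * d2 + b3 * d3 = 0 ∧
        (2 * t ≠ S.n → d1 = 0 ∧ b2 * d3 = 0 ∧ b3 * d2 = 0) ∧
        (2 * t = S.n → b2 * d3 + S.lam * (b3 * d2) = 0))
    ∧ (y * v = 0
      ↔ (1 - 2 * a1) * e1 = 0 ∧ a2 * e2 + a3 * e3 = 0 ∧
        (2 * t ≠ S.n → e1 = 0 ∧ a2 * e3 = 0 ∧ a3 * e2 = 0) ∧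
        (2 * t = S.n → a2 * e3 + S.lam * (a3 * e2) = 0))
    ∧ (z * v = 0
      ↔ (1 - 2 * b1) * e1 = 0 ∧ b2 * e2 + b3 * e3 = 0 ∧
        (2 * t ≠ S.n → e1 = 0 ∧ b2 * e3 = 0 ∧ b3 * e2 = 0) ∧
        (2 * t = S.n → b2 * e3 + S.lam * (b3 * e2) = 0)) := by
  subst hy hz hu hv
  have h := criterion S s t hs1 ht1 ht2 htodd P Q R T hP hQ hR hT
  exact ⟨h _ _ _ _ _ _, h _ _ _ _ _ _, h _ _ _ _ _ _, h _ _ _ _ _ _⟩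
end
end
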